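/- Let U ⊆ ℝⁿ be open and connected, let g, ĝ : U → ℝ^{n×n} be smooth maps whose values are symmetric invertible matrices, let V, V̂ : U → ℝ be smooth, let C, Ĉ : U × ℝⁿ → ℝⁿ be smooth, and let m ≤ n. Define λ : U → ℝ^{m×n} by λ_a^r = g_{ai} ĝ^{ir} (sum over i), where ĝ^{ir} are the entries of the inverse matrix of ĝ. Then the matching equations — λ_a^r ⟨jk,r⟩ = [jk,a] for all j,k = 1,…,n and a = 1,…,m, λ_a^j Ĉ_j = C_a, and λ_a^j ∂V̂/∂x^j = ∂V/∂x^a — hold on U if and only if λ satisfies the λ-equations, ĝ satisfies the ĝ-equations, V̂ satisfies the V̂-equations, and Ĉ satisfies the Ĉ-equations. -/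

import Mathlib

/-- Partial derivative in the `k`-th coordinate direction. -/
noncomputable def pd {n : ℕ} (k : Fin n) (f : (Fin n → ℝ) → ℝ) (x : Fin n → ℝ) : ℝ :=
  fderiv ℝ f x (Pi.single k 1)

/-- Christoffel symbol of the first kind `[ij,k]` of the matrix-valued map `g`. -/
noncomputable def chr {n : ℕ} (g : (Fin n → ℝ) → Matrix (Fin n) (Fin n) ℝ)
    (i j k : Fin n) (x : Fin n → ℝ) : ℝ :=
  (1/2) * (pd i (fun y => g y j k) x + pd j (fun y => g y i k) x - pd k (fun y => g y i j) x)

/-!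
Lowering the vector field `λ_a` with the metric `ĝ` gives the covector field `g_{a·}`. For `u`
with `ĝ`-lowering `p`, the Koszul-type identity
`2 u^r ⟨jk,r⟩ = ∂_j p_k + ∂_k p_j - (L_u ĝ)_{jk}`, compared with
`2 [jk,a] = ∂_j g_{ak} + ∂_k g_{aj} - ∂_a g_{jk}`, turns the matching equation for `(a, j, k)` into
the `ĝ`-equation `(L_{λ_a} ĝ)_{jk} = ∂_a g_{jk}`. The matching equations also say that the
Levi-Civita derivative of `λ_a` with respect to `ĝ`, lowered with `ĝ`, is `[ka,·]`, so the
`λ`-equations express the compatibility of that connection with `ĝ`, evaluated on `λ_a` and `λ_b`.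
-/

open Filter Topology
open scoped Matrix

section DifferentiableMatrix

variable {𝕜 E ι : Type*} [NontriviallyNormedField 𝕜] [NormedAddCommGroup E] [NormedSpace 𝕜 E]
  [Fintype ι] [DecidableEq ι] {A : E → Matrix ι ι 𝕜} {s : Set E} {x : E}

theorem differentiableWithinAt_matrix_det
    (hA : ∀ i j, DifferentiableWithinAt 𝕜 (fun y => A y i j) s x) :
    DifferentiableWithinAt 𝕜 (fun y => (A y).det) s x := by
  simp only [Matrix.det_apply']
  fun_prop

theorem differentiableWithinAt_matrix_inv_apply
    (hA : ∀ i j, DifferentiableWithinAt 𝕜 (fun y => A y i j) s x) (hdet : IsUnit (A x).det)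
    (i j : ι) : DifferentiableWithinAt 𝕜 (fun y => (A y)⁻¹ i j) s x := by
  have hadj : DifferentiableWithinAt 𝕜 (fun y => (A y).adjugate i j) s x := by
    simp only [Matrix.adjugate_apply]
    refine differentiableWithinAt_matrix_det fun k l => ?_
    simp only [Matrix.updateRow_apply]
    split_ifs
    exacts [differentiableWithinAt_const _, hA k l]
  simp only [Matrix.inv_def, Ring.inverse_eq_inv', Matrix.smul_apply, smul_eq_mul]
  exact ((differentiableWithinAt_matrix_det hA).fun_inv hdet.ne_zero).fun_mul hadj

theorem differentiableWithinAt_vecMul_inv_apply {p : E → ι → 𝕜}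
    (hp : ∀ i, DifferentiableWithinAt 𝕜 (fun y => p y i) s x)
    (hA : ∀ i j, DifferentiableWithinAt 𝕜 (fun y => A y i j) s x) (hdet : IsUnit (A x).det)
    (j : ι) : DifferentiableWithinAt 𝕜 (fun y => (p y ᵥ* (A y)⁻¹) j) s x :=
  .fun_sum fun i _ => (hp i).fun_mul (differentiableWithinAt_matrix_inv_apply hA hdet i j)

end DifferentiableMatrix

section PartialDerivative

variable {n : ℕ} {x : Fin n → ℝ}

theorem pd_congr {f f' : (Fin n → ℝ) → ℝ} (h : f =ᶠ[𝓝 x] f') (k : Fin n) :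
    pd k f x = pd k f' x := by
  rw [pd, pd, h.fderiv_eq]

theorem pd_sum_mul {ι : Type*} [Fintype ι] {f f' : (Fin n → ℝ) → ι → ℝ}
    (hf : ∀ i, DifferentiableAt ℝ (fun y => f y i) x)
    (hf' : ∀ i, DifferentiableAt ℝ (fun y => f' y i) x) (k : Fin n) :
    pd k (fun y => ∑ i, f y i * f' y i) x =
      ∑ i, pd k (fun y => f y i) x * f' x i + ∑ i, f x i * pd k (fun y => f' y i) x := by
  simp only [pd, fderiv_fun_sum fun i _ => (hf i).fun_mul (hf' i), sum_apply,
    fderiv_fun_mul (hf _) (hf' _), add_apply, smul_apply,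
    smul_eq_mul, ← Finset.sum_add_distrib]
  exact Finset.sum_congr rfl fun i _ => by ring

theorem pd_apply_comm {A : (Fin n → ℝ) → Matrix (Fin n) (Fin n) ℝ}
    (hA : ∀ᶠ y in 𝓝 x, (A y).IsSymm) (k i j : Fin n) :
    pd k (fun y => A y i j) x = pd k (fun y => A y j i) x :=
  pd_congr (hA.mono fun _ hy => hy.apply j i) k

end PartialDerivative

section SymmetricTensor

variable {n : ℕ} {A : (Fin n → ℝ) → Matrix (Fin n) (Fin n) ℝ} {u p w : (Fin n → ℝ) → Fin n → ℝ}
  {x : Fin n → ℝ}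

/-- The `(i, j)` component at `x` of the Lie derivative along the vector field `u` of the symmetric
covariant 2-tensor `A`. -/
noncomputable def lieDeriv (u : (Fin n → ℝ) → Fin n → ℝ)
    (A : (Fin n → ℝ) → Matrix (Fin n) (Fin n) ℝ) (i j : Fin n) (x : Fin n → ℝ) : ℝ :=
  ∑ l, u x l * pd l (fun y => A y i j) x + ∑ l, pd i (fun y => u y l) x * A x l j +
    ∑ l, pd j (fun y => u y l) x * A x l i

/-- The component `A_{il} (∇_k u)^l` at `x` of the Levi-Civita derivative of the vector field `u`
for the metric `A`. Lowering the index leaves only Christoffel symbols of the first kind, so `A`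
need not be invertible. -/
noncomputable def lowerCovDeriv (A : (Fin n → ℝ) → Matrix (Fin n) (Fin n) ℝ)
    (u : (Fin n → ℝ) → Fin n → ℝ) (k i : Fin n) (x : Fin n → ℝ) : ℝ :=
  ∑ l, pd k (fun y => u y l) x * A x l i + ∑ l, u x l * chr A k l i x

theorem chr_add_chr_swap (hA : ∀ᶠ y in 𝓝 x, (A y).IsSymm) (k i j : Fin n) :
    chr A k i j x + chr A k j i x = pd k (fun y => A y i j) x := by
  rw [chr, chr, pd_apply_comm hA k j i]
  ring

theorem pd_lower (hA : ∀ i j, DifferentiableAt ℝ (fun y => A y i j) x)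
    (hu : ∀ i, DifferentiableAt ℝ (fun y => u y i) x) (hup : (fun y => u y ᵥ* A y) =ᶠ[𝓝 x] p)
    (k i : Fin n) :
    pd k (fun y => p y i) x =
      ∑ l, pd k (fun y => u y l) x * A x l i + ∑ l, u x l * pd k (fun y => A y l i) x :=
  calc pd k (fun y => p y i) x
      = pd k (fun y => ∑ l, u y l * A y l i) x :=
        pd_congr (hup.symm.mono fun _ hy => congrFun hy i) k
    _ = _ := pd_sum_mul hu (fun l => hA l i) k

theorem two_mul_sum_mul_chr (hAsymm : ∀ᶠ y in 𝓝 x, (A y).IsSymm)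
    (hA : ∀ i j, DifferentiableAt ℝ (fun y => A y i j) x)
    (hu : ∀ i, DifferentiableAt ℝ (fun y => u y i) x) (hup : (fun y => u y ᵥ* A y) =ᶠ[𝓝 x] p)
    (j k : Fin n) :
    2 * ∑ r, u x r * chr A j k r x =
      pd j (fun y => p y k) x + pd k (fun y => p y j) x - lieDeriv u A j k x := by
  have expand : 2 * ∑ r, u x r * chr A j k r x =
      ∑ r, u x r * pd j (fun y => A y r k) x + ∑ r, u x r * pd k (fun y => A y r j) x -
        ∑ r, u x r * pd r (fun y => A y j k) x := by
    rw [← Finset.sum_add_distrib, ← Finset.sum_sub_distrib, Finset.mul_sum]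
    refine Finset.sum_congr rfl fun r _ => ?_
    rw [chr, pd_apply_comm hAsymm j k r, pd_apply_comm hAsymm k j r]
    ring
  rw [expand, pd_lower hA hu hup, pd_lower hA hu hup, lieDeriv]
  ring

theorem lowerCovDeriv_add_sum_mul_chr (hAsymm : ∀ᶠ y in 𝓝 x, (A y).IsSymm)
    (hA : ∀ i j, DifferentiableAt ℝ (fun y => A y i j) x)
    (hu : ∀ i, DifferentiableAt ℝ (fun y => u y i) x) (hup : (fun y => u y ᵥ* A y) =ᶠ[𝓝 x] p)
    (k i : Fin n) :
    lowerCovDeriv A u k i x + ∑ l, u x l * chr A k i l x = pd k (fun y => p y i) x := by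
  rw [pd_lower hA hu hup, lowerCovDeriv, add_assoc, ← Finset.sum_add_distrib]
  simp only [← mul_add, chr_add_chr_swap hAsymm]

theorem sum_lowerCovDeriv_mul (hAx : (A x).IsSymm) (k : Fin n) :
    ∑ l, lowerCovDeriv A w k l x * u x l =
      ∑ i, (∑ l, u x l * chr A k i l x) * w x i +
        ∑ i, (u x ᵥ* A x) i * pd k (fun y => w y i) x := by
  simp only [lowerCovDeriv, Matrix.vecMul, dotProduct, add_mul, Finset.sum_mul,
    Finset.sum_add_distrib]
  rw [add_comm, Finset.sum_comm, Finset.sum_comm (f := fun l i => pd k _ x * A x i l * u x l)]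
  congr 1 <;> refine Finset.sum_congr rfl fun i _ => Finset.sum_congr rfl fun l _ => ?_
  · ring
  · rw [hAx.apply l i]
    ring

/-- Since `p` is `u` lowered by the metric, this is the compatibility of the Levi-Civita connection
with the metric, `∂_k ⟨u, w⟩ = ⟨∇_k u, w⟩ + ⟨u, ∇_k w⟩`. -/
theorem pd_sum_lower_mul (hAsymm : ∀ᶠ y in 𝓝 x, (A y).IsSymm)
    (hA : ∀ i j, DifferentiableAt ℝ (fun y => A y i j) x)
    (hu : ∀ i, DifferentiableAt ℝ (fun y => u y i) x)
    (hp : ∀ i, DifferentiableAt ℝ (fun y => p y i) x)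
    (hw : ∀ i, DifferentiableAt ℝ (fun y => w y i) x)
    (hup : (fun y => u y ᵥ* A y) =ᶠ[𝓝 x] p) (k : Fin n) :
    pd k (fun y => ∑ i, p y i * w y i) x =
      ∑ i, lowerCovDeriv A u k i x * w x i + ∑ i, lowerCovDeriv A w k i x * u x i := by
  rw [sum_lowerCovDeriv_mul (u := u) hAsymm.self_of_nhds, pd_sum_mul hp hw, hup.eq_of_nhds]
  simp only [← lowerCovDeriv_add_sum_mul_chr hAsymm hA hu hup, add_mul, Finset.sum_add_distrib,
    add_assoc]

end SymmetricTensor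

section Matching

variable {n : ℕ} {g ghat : (Fin n → ℝ) → Matrix (Fin n) (Fin n) ℝ}
  {u w : (Fin n → ℝ) → Fin n → ℝ} {x : Fin n → ℝ} {c d : Fin n}

theorem sum_mul_chr_eq_chr_iff_lieDeriv_eq (hgsymm : ∀ᶠ y in 𝓝 x, (g y).IsSymm)
    (hghatsymm : ∀ᶠ y in 𝓝 x, (ghat y).IsSymm)
    (hghat : ∀ i j, DifferentiableAt ℝ (fun y => ghat y i j) x)
    (hu : ∀ i, DifferentiableAt ℝ (fun y => u y i) x)
    (hug : (fun y => u y ᵥ* ghat y) =ᶠ[𝓝 x] fun y => g y c) (j k : Fin n) :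
    ∑ r, u x r * chr ghat j k r x = chr g j k c x ↔
      lieDeriv u ghat j k x = pd c (fun y => g y j k) x := by
  have koszul := two_mul_sum_mul_chr hghatsymm hghat hu hug j k
  rw [chr, pd_apply_comm hgsymm j k c, pd_apply_comm hgsymm k j c]
  constructor <;> intro h <;> linarith

theorem lowerCovDeriv_eq_chr (hgsymm : ∀ᶠ y in 𝓝 x, (g y).IsSymm)
    (hghatsymm : ∀ᶠ y in 𝓝 x, (ghat y).IsSymm)
    (hghat : ∀ i j, DifferentiableAt ℝ (fun y => ghat y i j) x)
    (hu : ∀ i, DifferentiableAt ℝ (fun y => u y i) x)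
    (hug : (fun y => u y ᵥ* ghat y) =ᶠ[𝓝 x] fun y => g y c) {k i : Fin n}
    (hmatch : ∑ r, u x r * chr ghat k i r x = chr g k i c x) :
    lowerCovDeriv ghat u k i x = chr g k c i x := by
  have hcov := lowerCovDeriv_add_sum_mul_chr hghatsymm hghat hu hug k i
  rw [hmatch, ← chr_add_chr_swap hgsymm k c i] at hcov
  exact add_right_cancel hcov

theorem lambda_equation_of_matching (hgsymm : ∀ᶠ y in 𝓝 x, (g y).IsSymm)
    (hghatsymm : ∀ᶠ y in 𝓝 x, (ghat y).IsSymm)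
    (hg : ∀ i, DifferentiableAt ℝ (fun y => g y c i) x)
    (hghat : ∀ i j, DifferentiableAt ℝ (fun y => ghat y i j) x)
    (hu : ∀ i, DifferentiableAt ℝ (fun y => u y i) x)
    (hw : ∀ i, DifferentiableAt ℝ (fun y => w y i) x)
    (hug : (fun y => u y ᵥ* ghat y) =ᶠ[𝓝 x] fun y => g y c)
    (hwg : (fun y => w y ᵥ* ghat y) =ᶠ[𝓝 x] fun y => g y d) {k : Fin n}
    (humatch : ∀ i, ∑ r, u x r * chr ghat k i r x = chr g k i c x)
    (hwmatch : ∀ i, ∑ r, w x r * chr ghat k i r x = chr g k i d x) :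
    pd k (fun y => ∑ i, g y c i * w y i) x - ∑ i, chr g k c i x * w x i
      - ∑ i, chr g k d i x * u x i = 0 := by
  rw [pd_sum_lower_mul hghatsymm hghat hu hg hw hug k]
  simp only [lowerCovDeriv_eq_chr hgsymm hghatsymm hghat hu hug (humatch _),
    lowerCovDeriv_eq_chr hgsymm hghatsymm hghat hw hwg (hwmatch _)]
  ring

/-- The gradients of `V` and `V̂` become arbitrary covector fields `F` and `Fhat`, the distinguished
coordinates `1, …, m` an arbitrary family `e`, and `λ = g ĝ⁻¹` becomes `λ ĝ = g`. -/
theorem matching_iff_lambda_ghat_Vhat_Chat_general {n : ℕ} {ι W : Type*} (e : ι → Fin n)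
    {U : Set (Fin n → ℝ)} (hU : IsOpen U) {g ghat : (Fin n → ℝ) → Matrix (Fin n) (Fin n) ℝ}
    (hg : ∀ i j, DifferentiableOn ℝ (fun x => g x i j) U)
    (hghat : ∀ i j, DifferentiableOn ℝ (fun x => ghat x i j) U)
    (hgsymm : ∀ x ∈ U, (g x).IsSymm) (hghatsymm : ∀ x ∈ U, (ghat x).IsSymm)
    (F Fhat : (Fin n → ℝ) → Fin n → ℝ) (C Chat : (Fin n → ℝ) → W → Fin n → ℝ)
    {lam : (Fin n → ℝ) → ι → Fin n → ℝ}
    (hlam : ∀ a r, DifferentiableOn ℝ (fun x => lam x a r) U)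
    (hlamg : ∀ x ∈ U, ∀ a, lam x a ᵥ* ghat x = g x (e a)) :
    ((∀ x ∈ U, ∀ a j k, ∑ r, lam x a r * chr ghat j k r x = chr g j k (e a) x) ∧
      (∀ x ∈ U, ∀ v a, ∑ j, lam x a j * Chat x v j = C x v (e a)) ∧
      (∀ x ∈ U, ∀ a, ∑ j, lam x a j * Fhat x j = F x (e a)))
    ↔
    ((∀ x ∈ U, ∀ k a b,
        pd k (fun y => ∑ i, g y (e a) i * lam y b i) x - ∑ i, chr g k (e a) i x * lam x b i
          - ∑ i, chr g k (e b) i x * lam x a i = 0) ∧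
      (∀ x ∈ U, ∀ a i j,
        lieDeriv (fun y => lam y a) ghat i j x = pd (e a) (fun y => g y i j) x) ∧
      (∀ x ∈ U, ∀ a, ∑ j, lam x a j * Fhat x j = F x (e a)) ∧
      (∀ x ∈ U, ∀ v a, ∑ j, lam x a j * Chat x v j = C x v (e a))) := by
  have near {P : (Fin n → ℝ) → Prop} (hP : ∀ x ∈ U, P x) {x} (hx : x ∈ U) : ∀ᶠ y in 𝓝 x, P y :=
    (hU.eventually_mem hx).mono hP
  have diffAt {f : (Fin n → ℝ) → ℝ} (hf : DifferentiableOn ℝ f U) {x} (hx : x ∈ U) :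
      DifferentiableAt ℝ f x := hf.differentiableAt (hU.mem_nhds hx)
  have lowers {x} (hx : x ∈ U) (a : ι) : (fun y => lam y a ᵥ* ghat y) =ᶠ[𝓝 x] fun y => g y (e a) :=
    near (fun y hy => hlamg y hy a) hx
  have ghat_iff {x} (hx : x ∈ U) (a : ι) (j k : Fin n) :=
    sum_mul_chr_eq_chr_iff_lieDeriv_eq (near hgsymm hx) (near hghatsymm hx)
      (fun i j => diffAt (hghat i j) hx) (fun i => diffAt (hlam a i) hx) (lowers hx a) j k
  constructor
  · rintro ⟨hmatch, hC, hF⟩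
    refine ⟨fun x hx k a b => ?_, fun x hx a i j => (ghat_iff hx a i j).1 (hmatch x hx a i j),
      hF, hC⟩
    exact lambda_equation_of_matching (near hgsymm hx) (near hghatsymm hx)
      (fun i => diffAt (hg _ i) hx) (fun i j => diffAt (hghat i j) hx)
      (fun i => diffAt (hlam a i) hx) (fun i => diffAt (hlam b i) hx) (lowers hx a) (lowers hx b)
      (hmatch x hx a k) (hmatch x hx b k)
  · rintro ⟨-, hghatEq, hF, hC⟩
    exact ⟨fun x hx a j k => (ghat_iff hx a j k).2 (hghatEq x hx a j k), hC, hF⟩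

end Matching

/-- **Theorem 2.1.**  The matching equations are equivalent to the
`λ`-equations together with the `ĝ`-, `V̂`- and `Ĉ`-equations. -/
theorem matching_iff_lambda_ghat_Vhat_Chat
    {n m : ℕ} (hmn : m ≤ n) (U : Set (Fin n → ℝ))
    (hUopen : IsOpen U) (hUconn : IsConnected U)
    (g ghat : (Fin n → ℝ) → Matrix (Fin n) (Fin n) ℝ)
    (hg : ∀ i j, ContDiffOn ℝ (⊤ : ℕ∞) (fun x => g x i j) U)
    (hghat : ∀ i j, ContDiffOn ℝ (⊤ : ℕ∞) (fun x => ghat x i j) U)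
    (hgsym : ∀ x ∈ U, (g x).IsSymm)
    (hghatsym : ∀ x ∈ U, (ghat x).IsSymm)
    (hginv : ∀ x ∈ U, IsUnit (g x).det)
    (hghatinv : ∀ x ∈ U, IsUnit (ghat x).det)
    (V Vhat : (Fin n → ℝ) → ℝ)
    (hV : ContDiffOn ℝ (⊤ : ℕ∞) V U) (hVhat : ContDiffOn ℝ (⊤ : ℕ∞) Vhat U)
    (C Chat : (Fin n → ℝ) → (Fin n → ℝ) → Fin n → ℝ)
    (hC : ∀ j, ContDiffOn ℝ (⊤ : ℕ∞) (fun p : (Fin n → ℝ) × (Fin n → ℝ) => C p.1 p.2 j)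
      (U ×ˢ (Set.univ : Set (Fin n → ℝ))))
    (hChat : ∀ j, ContDiffOn ℝ (⊤ : ℕ∞) (fun p : (Fin n → ℝ) × (Fin n → ℝ) => Chat p.1 p.2 j)
      (U ×ˢ (Set.univ : Set (Fin n → ℝ))))
    (lam : (Fin n → ℝ) → Fin m → Fin n → ℝ)
    (hlamdef : ∀ x (a : Fin m) (r : Fin n),
      lam x a r = ∑ i, g x (Fin.castLE hmn a) i * (ghat x)⁻¹ i r) :
    -- the matching equations hold on U ...
    ((∀ x ∈ U, ∀ (a : Fin m) (j k : Fin n),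
        ∑ r, lam x a r * chr ghat j k r x = chr g j k (Fin.castLE hmn a) x) ∧
     (∀ x ∈ U, ∀ (v : Fin n → ℝ) (a : Fin m),
        ∑ j, lam x a j * Chat x v j = C x v (Fin.castLE hmn a)) ∧
     (∀ x ∈ U, ∀ (a : Fin m),
        ∑ j, lam x a j * pd j Vhat x = pd (Fin.castLE hmn a) V x))
    ↔
    -- ... iff the λ-equations, ĝ-equations, V̂-equations and Ĉ-equations hold on U
    ((∀ x ∈ U, ∀ (k : Fin n) (a b : Fin m),
        pd k (fun y => ∑ i, g y (Fin.castLE hmn a) i * lam y b i) x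
          - ∑ i, chr g k (Fin.castLE hmn a) i x * lam x b i
          - ∑ i, chr g k (Fin.castLE hmn b) i x * lam x a i = 0) ∧
     (∀ x ∈ U, ∀ (a : Fin m) (i j : Fin n),
        ∑ l, lam x a l * pd l (fun y => ghat y i j) x
          + ∑ l, pd i (fun y => lam y a l) x * ghat x l j
          + ∑ l, pd j (fun y => lam y a l) x * ghat x l i
          = pd (Fin.castLE hmn a) (fun y => g y i j) x) ∧
     (∀ x ∈ U, ∀ (a : Fin m),
        ∑ j, lam x a j * pd j Vhat x = pd (Fin.castLE hmn a) V x) ∧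
     (∀ x ∈ U, ∀ (v : Fin n → ℝ) (a : Fin m),
        ∑ j, lam x a j * Chat x v j = C x v (Fin.castLE hmn a))) := by
  have hrow : ∀ x a, lam x a = g x (Fin.castLE hmn a) ᵥ* (ghat x)⁻¹ := fun x a =>
    funext (hlamdef x a)
  have hgdiff i j := (hg i j).differentiableOn (by simp)
  have hghatdiff i j := (hghat i j).differentiableOn (by simp)
  have hlam : ∀ a r, DifferentiableOn ℝ (fun x => lam x a r) U := fun a r x hx => by
    simpa only [hrow] using differentiableWithinAt_vecMul_inv_apply (fun i => hgdiff _ i x hx)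
      (fun i j => hghatdiff i j x hx) (hghatinv x hx) r
  have hlamg : ∀ x ∈ U, ∀ a, lam x a ᵥ* ghat x = g x (Fin.castLE hmn a) := fun x hx a => by
    rw [hrow, Matrix.vecMul_vecMul, Matrix.nonsing_inv_mul _ (hghatinv x hx), Matrix.vecMul_one]
  exact matching_iff_lambda_ghat_Vhat_Chat_general (Fin.castLE hmn) hUopen hgdiff hghatdiff hgsym
    hghatsym (fun x j => pd j V x) (fun x j => pd j Vhat x) C Chat hlam hlamg
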